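/- The group algebra of the symmetric group S_n over a field of characteristic zero is isomorphic (as a k-algebra) to a finite direct product of matrix algebras over k, one for each partition of n. -/

import Mathlib

namespace SymGroupAlg

open MonoidAlgebra

/-- A central element of the group algebra has coefficients constant on conjugacy classes. -/
lemma coeff_eq_of_central {k G : Type*} [Field k] [Group G] (x : MonoidAlgebra k G)
    (hx : ∀ y, x * y = y * x) {g h : G} (hgh : IsConj g h) : x.coeff g = x.coeff h := by
  obtain ⟨c, rfl⟩ := isConj_iff.1 hgh
  have h1 := congrArg (fun z => z.coeff (c * g)) (hx (single c 1))
  simp only [coeff_mul_single_apply, coeff_single_mul_apply, mul_one, one_mul] at h1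
  rw [h1]
  congr 1
  group

/-- The element of the group algebra attached to a class function. -/
noncomputable def classElt {k G : Type*} [Field k] [Group G] [Finite G] :
    (ConjClasses G → k) →ₗ[k] MonoidAlgebra k G where
  toFun f := .ofCoeff (Finsupp.equivFunOnFinite.symm fun g => f (ConjClasses.mk g))
  map_add' f g := by ext; simp
  map_smul' c f := by ext; simp

lemma classElt_coeff {k G : Type*} [Field k] [Group G] [Finite G] (f : ConjClasses G → k) (g : G) :
    (classElt f).coeff g = f (ConjClasses.mk g) := rfl

lemma classElt_central {k G : Type*} [Field k] [Group G] [Finite G] (f : ConjClasses G → k)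
    (y : MonoidAlgebra k G) : classElt f * y = y * classElt f := by
  induction y using MonoidAlgebra.induction_linear with
  | zero => simp
  | add x y hx hy => rw [mul_add, add_mul, hx, hy]
  | single m r =>
    ext h
    rw [coeff_mul_single_apply, coeff_single_mul_apply, classElt_coeff, classElt_coeff, mul_comm]
    congr 2
    rw [ConjClasses.mk_eq_mk_iff_isConj, isConj_iff]
    exact ⟨m⁻¹, by group⟩

/-- The number of blocks equals the number of conjugacy classes. -/
lemma card_blocks {k G : Type*} [Field k] [Group G] [Finite G] (m : ℕ) (d : Fin m → ℕ)
    (hd : ∀ i, NeZero (d i))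
    (e : MonoidAlgebra k G ≃ₐ[k] Π i, Matrix (Fin (d i)) (Fin (d i)) k) :
    m = Nat.card (ConjClasses G) := by
  classical
  have : Fintype (ConjClasses G) := Fintype.ofFinite _
  rw [Nat.card_eq_fintype_card]
  apply le_antisymm
  · let F : (Fin m → k) →ₗ[k] (ConjClasses G → k) :=
      { toFun := fun c C => (e.symm (fun i => c i • (1 : Matrix (Fin (d i)) (Fin (d i)) k))).coeff
          (Quotient.out C)
        map_add' := fun a b => by
          funext C
          have : (fun i => (a + b) i • (1 : Matrix (Fin (d i)) (Fin (d i)) k)) =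
            (fun i => a i • (1 : Matrix (Fin (d i)) (Fin (d i)) k)) +
              (fun i => b i • (1 : Matrix (Fin (d i)) (Fin (d i)) k)) := by
            funext i; simp [add_smul]
          rw [this, map_add]; rfl
        map_smul' := fun r a => by
          funext C
          have : (fun i => (r • a) i • (1 : Matrix (Fin (d i)) (Fin (d i)) k)) =
            r • (fun i => a i • (1 : Matrix (Fin (d i)) (Fin (d i)) k)) := by
            funext i; simp [mul_smul]
          rw [this, map_smul]; rfl }
    have hF : Function.Injective F := by
      rw [injective_iff_map_eq_zero]
      intro c hc
      set z : Π i, Matrix (Fin (d i)) (Fin (d i)) k := fun i => c i • 1 with hz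
      have hcen : ∀ y, e.symm z * y = y * e.symm z := by
        intro y
        apply e.injective
        rw [map_mul, map_mul, AlgEquiv.apply_symm_apply]
        funext i
        simp [hz]
      have h0 : e.symm z = 0 := by
        ext g
        have h1 : (e.symm z).coeff (Quotient.out (ConjClasses.mk g)) = 0 :=
          congrFun hc (ConjClasses.mk g)
        have h2 : IsConj (Quotient.out (ConjClasses.mk g)) g :=
          ConjClasses.mk_eq_mk_iff_isConj.1 (Quotient.out_eq (ConjClasses.mk g))
        rw [← coeff_eq_of_central _ hcen h2, h1]
        rfl
      have hz0 : z = 0 := by simpa using h0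
      funext i
      have := hd i
      simpa [hz] using congrFun (congrFun (congrFun hz0 i) 0) 0
    simpa using LinearMap.finrank_le_finrank_of_injective hF
  · let F : (ConjClasses G → k) →ₗ[k] (Fin m → k) :=
      { toFun := fun f i => e (classElt f) i 0 0
        map_add' := fun a b => by funext i; simp
        map_smul' := fun r a => by funext i; simp }
    have hF : Function.Injective F := by
      rw [injective_iff_map_eq_zero]
      intro f hf
      have h0 : e (classElt f) = 0 := by
        funext i
        have hc : e (classElt f) i ∈ Set.range (Matrix.scalar (Fin (d i))) := by
          rw [Matrix.mem_range_scalar_iff_commute_single']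
          intro a b
          have h1 := classElt_central f (e.symm (Pi.single i (Matrix.single a b 1)))
          have h2 := congrFun (congrArg e h1) i
          simpa [commute_iff_eq] using h2.symm
        obtain ⟨r, hr⟩ := hc
        have h3 : e (classElt f) i 0 0 = 0 := congrFun hf i
        rw [← hr] at h3 ⊢
        have h4 : r = 0 := by simpa using h3
        simp [h4]
      have h1 : classElt f = 0 := by simpa using h0
      funext C
      obtain ⟨g, rfl⟩ := ConjClasses.exists_rep C
      rw [← classElt_coeff f g, h1]; rfl
    simpa using LinearMap.finrank_le_finrank_of_injective hF

/-- Conjugacy classes of permutations correspond to partitions. -/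
lemma card_conj (n : ℕ) : Nat.card (ConjClasses (Equiv.Perm (Fin n))) = Nat.card n.Partition := by
  have hn : Nat.card n.Partition = Nat.card (Fintype.card (Fin n)).Partition := by
    rw [Fintype.card_fin]
  rw [hn]
  refine Nat.card_congr (Equiv.ofBijective
    (Quotient.lift (fun σ : Equiv.Perm (Fin n) => σ.partition)
      fun a b h => Equiv.Perm.partition_eq_of_isConj.1 h) ⟨?_, ?_⟩)
  · intro a b
    induction a using Quotient.inductionOn
    induction b using Quotient.inductionOn
    intro h
    exact Quotient.sound (Equiv.Perm.partition_eq_of_isConj.2 h)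
  · intro p
    have hsplit : p.parts = p.parts.filter (2 ≤ ·) +
        Multiset.replicate (Multiset.card (p.parts.filter (¬ 2 ≤ ·))) 1 := by
      conv_lhs => rw [← Multiset.filter_add_not (2 ≤ ·) p.parts]
      congr 1
      rw [Multiset.eq_replicate]
      refine ⟨rfl, fun b hb => ?_⟩
      rw [Multiset.mem_filter] at hb
      have := p.parts_pos hb.1
      omega
    have hsum := congrArg Multiset.sum hsplit
    rw [p.parts_sum, Multiset.sum_add, Multiset.sum_replicate, smul_eq_mul, mul_one] at hsum
    obtain ⟨σ, hσ⟩ := (Equiv.Perm.exists_with_cycleType_iff (α := Fin n)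
      (m := p.parts.filter (2 ≤ ·))).2 ⟨by omega, fun a ha => (Multiset.mem_filter.1 ha).2⟩
    refine ⟨Quotient.mk _ σ, ?_⟩
    change σ.partition = p
    rw [Nat.Partition.ext_iff, Equiv.Perm.parts_partition, ← Equiv.Perm.sum_cycleType, hσ]
    conv_rhs => rw [hsplit]
    congr 2
    omega

lemma sum_rowLens (μ : YoungDiagram) : μ.rowLens.sum = μ.card := by
  have h : μ.card = ∑ i ∈ Finset.range (μ.colLen 0), (μ.row i).card := by
    refine Finset.card_eq_sum_card_fiberwise (f := Prod.fst) ?_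
    rintro ⟨i, j⟩ hc
    have hc' : (i, j) ∈ μ := hc
    simp only [Finset.coe_range, Set.mem_Iio]
    rw [← YoungDiagram.mem_iff_lt_colLen]
    exact μ.up_left_mem le_rfl (Nat.zero_le _) hc'
  rw [h, YoungDiagram.rowLens]
  simp_rw [← YoungDiagram.rowLen_eq_card]
  rfl

/-- Young diagrams with `n` cells correspond to partitions of `n`. -/
lemma card_young (n : ℕ) :
    Nat.card {μ : YoungDiagram // μ.card = n} = Nat.card n.Partition := by
  refine Nat.card_congr (Equiv.ofBijective
    (fun μ => (⟨(μ.1.rowLens : Multiset ℕ), fun h => μ.1.pos_of_mem_rowLens _ (by simpa using h),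
      by rw [Multiset.sum_coe, sum_rowLens, μ.2]⟩ : n.Partition)) ⟨?_, ?_⟩)
  · intro a b h
    have h1 : (a.1.rowLens : Multiset ℕ) = b.1.rowLens := congrArg Nat.Partition.parts h
    have h2 : a.1.rowLens = b.1.rowLens :=
      (Multiset.coe_eq_coe.1 h1).eq_of_pairwise' a.1.rowLens_sorted.pairwise
        b.1.rowLens_sorted.pairwise
    apply Subtype.ext
    apply YoungDiagram.equivListRowLens.injective
    exact Subtype.ext h2
  · intro p
    have hs : (p.parts.sort (· ≥ ·)).SortedGE := (Multiset.pairwise_sort p.parts (· ≥ ·)).sortedGE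
    have hr := YoungDiagram.rowLens_ofRowLens_eq_self (hw := hs)
      (fun x hx => p.parts_pos (by simpa using hx))
    refine ⟨⟨YoungDiagram.ofRowLens _ hs, ?_⟩, ?_⟩
    · rw [← sum_rowLens, hr, ← Multiset.sum_coe, Multiset.sort_eq, p.parts_sum]
    · apply Nat.Partition.ext
      simp only [hr, Multiset.sort_eq]

end SymGroupAlg

/-- The group algebra of `S_n` over a field of characteristic zero is isomorphic, as a
`k`-algebra, to a finite direct product of matrix algebras over `k`, one for each
partition of `n` (partitions being encoded as Young diagrams with `n` cells). -/
theorem groupAlgebra_symmetricGroup_iso_prod_matrix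
    (k : Type) [Field k] [CharZero k] [IsAlgClosed k] (n : ℕ) :
    ∃ h : {μ : YoungDiagram // μ.card = n} → ℕ,
      Nonempty (MonoidAlgebra k (Equiv.Perm (Fin n)) ≃ₐ[k]
        Π μ : {μ : YoungDiagram // μ.card = n}, Matrix (Fin (h μ)) (Fin (h μ)) k) := by
  have : NeZero (Nat.card (Equiv.Perm (Fin n)) : k) := ⟨by
    rw [Nat.cast_ne_zero]; exact Nat.card_pos.ne'⟩
  have : IsSemisimpleRing (MonoidAlgebra k (Equiv.Perm (Fin n))) := inferInstance
  have : FiniteDimensional k (MonoidAlgebra k (Equiv.Perm (Fin n))) := inferInstance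
  obtain ⟨m, d, hd, ⟨e⟩⟩ := IsSemisimpleRing.exists_algEquiv_pi_matrix_of_isAlgClosed k
    (MonoidAlgebra k (Equiv.Perm (Fin n)))
  have hm : Nat.card {μ : YoungDiagram // μ.card = n} = m := by
    rw [SymGroupAlg.card_young, ← SymGroupAlg.card_conj, ← SymGroupAlg.card_blocks m d hd e]
  have hpos : 0 < m := by
    rw [SymGroupAlg.card_blocks m d hd e]; exact Nat.card_pos
  have : Finite {μ : YoungDiagram // μ.card = n} :=
    Nat.finite_of_card_ne_zero (by omega)
  let E : {μ : YoungDiagram // μ.card = n} ≃ Fin m := Finite.equivFinOfCardEq hm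
  exact ⟨fun μ => d (E μ), ⟨e.trans
    (AlgEquiv.piCongrLeft k (fun i => Matrix (Fin (d i)) (Fin (d i)) k) E).symm⟩⟩
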